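/- arXiv:1105.2076 — 3 statements merged into one kernel-verified Lean document; each statement's English description precedes it below -/
import Mathlib

section
/- Let m ≥ 1 be an integer, X a set, and a_1,…,a_m elements of X. In the free abelian group on the set of m-tuples of elements of X, the following identity holds: Σ_{k=0}^{m} (−1)^k Σ_{σ ∈ Σ_{k,m−k}} (b^{(k)}_{σ(1)}, …, b^{(k)}_{σ(m)}) = 0, where for each k the tuple (b^{(k)}_1,…,b^{(k)}_m) := (a_k, a_{k−1}, …, a_1, a_{k+1}, a_{k+2}, …, a_m) is obtained from (a_1,…,a_m) by reversing the first k entries. -/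
/-- The set of `(k, n−k)`-shuffles: permutations `σ` of `{0,…,n−1}` such that
`σ⁻¹` is increasing on the first `k` letters and on the last `n−k` letters. -/
def shuffles (n k : ℕ) : Finset (Equiv.Perm (Fin n)) :=
  Finset.univ.filter fun σ =>
    (∀ i j : Fin n, (i : ℕ) < (j : ℕ) → (j : ℕ) < k → σ⁻¹ i < σ⁻¹ j) ∧
    (∀ i j : Fin n, (i : ℕ) < (j : ℕ) → k ≤ (i : ℕ) → σ⁻¹ i < σ⁻¹ j)

/-!
Reversing the first `k` letters turns the `(k, m - k)`-shuffles into the permutations `τ` whose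
inverse decreases on the first `k` positions and increases on the others, and it turns the `σ`-th
term of the `k`-th sum into `(a_{τ(1)}, …, a_{τ(m)})`. The inverse of `τ` can have this shape only
for the two values of `k` that put the cut immediately before or immediately after the position
where it is minimal, and it has the shape for both or for neither. These two values of `k` carry
opposite signs, so the terms cancel.
-/

section VShaped

variable {m k : ℕ} {α : Type*}

/-- A word `w` of length `m` is V-shaped at the cut `k` if it strictly decreases on its first `k`
letters and strictly increases on the remaining ones. The two letters adjacent to the cut are not
compared, so that a V-shaped word admits the cuts on either side of its minimum. -/
def IsVShapedAt [Preorder α] (w : Fin m → α) (k : ℕ) : Prop :=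
  StrictAntiOn w {i | (i : ℕ) < k} ∧ StrictMonoOn w {i | k ≤ (i : ℕ)}

theorem IsVShapedAt.eq_or_eq_succ_of_forall_le [Preorder α] {w : Fin m → α} {p : Fin m}
    (hp : ∀ i, w p ≤ w i) (hk : k ≤ m) (hw : IsVShapedAt w k) :
    k = p ∨ k = p + 1 := by
  obtain ⟨anti, mono⟩ := hw
  by_contra! hne
  rcases lt_or_ge (p : ℕ) k with hpk | hkp
  · let q : Fin m := ⟨p + 1, by lia⟩
    have hqp : w q < w p := anti hpk (show p + 1 < k by lia) (Fin.lt_def.2 (Nat.lt_succ_self p))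
    exact (hp q).not_gt hqp
  · let q : Fin m := ⟨p - 1, by lia⟩
    have hqp : w q < w p := mono (show k ≤ p - 1 by lia) hkp (show (p - 1 : ℕ) < p by lia)
    exact (hp q).not_gt hqp

theorem isVShapedAt_succ_iff_of_forall_ne_lt [Preorder α] {w : Fin m → α} {p : Fin m}
    (hp : ∀ i, i ≠ p → w p < w i) :
    IsVShapedAt w (p + 1) ↔ IsVShapedAt w p := by
  have anti : StrictAntiOn w (Set.Iic p) ↔ StrictAntiOn w (Set.Iio p) := by
    rw [← Set.Iio_insert, strictAntiOn_insert_iff_of_forall_le fun i hi => (Set.mem_Iio.1 hi).le]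
    exact and_iff_right fun i _ hi => hp i hi.ne
  have mono : StrictMonoOn w (Set.Ici p) ↔ StrictMonoOn w (Set.Ioi p) := by
    rw [← Set.Ioi_insert, strictMonoOn_insert_iff_of_forall_ge fun i hi => (Set.mem_Ioi.1 hi).le]
    exact and_iff_right fun i _ hi => hp i hi.ne'
  have hIic : {i : Fin m | (i : ℕ) < p + 1} = Set.Iic p := Set.ext fun _ => Nat.lt_succ_iff
  calc IsVShapedAt w (p + 1)
      ↔ StrictAntiOn w (Set.Iic p) ∧ StrictMonoOn w (Set.Ioi p) := by rw [← hIic]; rfl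
    _ ↔ StrictAntiOn w (Set.Iio p) ∧ StrictMonoOn w (Set.Ici p) := and_congr anti mono.symm
    _ ↔ IsVShapedAt w p := Iff.rfl

open scoped Classical in
theorem sum_neg_one_pow_isVShapedAt_eq_zero [LinearOrder α] [NeZero m] {w : Fin m → α}
    (hw : Function.Injective w) :
    ∑ k ∈ Finset.range (m + 1) with IsVShapedAt w k, (-1 : ℤ) ^ k = 0 := by
  obtain ⟨p, hp⟩ := Finite.exists_min w
  have hp_strict (i : Fin m) (hi : i ≠ p) : w p < w i := (hp i).lt_of_ne (hw.ne hi.symm)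
  have hcuts : {k ∈ Finset.range (m + 1) | IsVShapedAt w k} =
      {k ∈ ({(p : ℕ), (p : ℕ) + 1} : Finset ℕ) | IsVShapedAt w k} := by
    ext k
    simp only [Finset.mem_filter, Finset.mem_range, Finset.mem_insert, Finset.mem_singleton]
    exact and_congr_left fun hk =>
      ⟨fun hkm => hk.eq_or_eq_succ_of_forall_le hp (Nat.lt_succ_iff.1 hkm), fun h => by lia⟩
  rw [hcuts, Finset.sum_filter, Finset.sum_pair (lt_add_one (p : ℕ)).ne]
  simp only [isVShapedAt_succ_iff_of_forall_ne_lt hp_strict]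
  split_ifs <;> ring

open scoped Classical in
theorem sum_neg_one_pow_smul_sum_isVShapedAt_eq_zero [LinearOrder α] [NeZero m] {ι G : Type*}
    [AddCommGroup G] (s : Finset ι) {w : ι → Fin m → α} (hw : ∀ x ∈ s, Function.Injective (w x))
    (f : ι → G) :
    ∑ k ∈ Finset.range (m + 1), (-1 : ℤ) ^ k • ∑ x ∈ s with IsVShapedAt (w x) k, f x = 0 := by
  simp only [Finset.smul_sum]
  calc ∑ k ∈ Finset.range (m + 1), ∑ x ∈ s with IsVShapedAt (w x) k, (-1 : ℤ) ^ k • f x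
      = ∑ x ∈ s, ∑ k ∈ Finset.range (m + 1) with IsVShapedAt (w x) k, (-1 : ℤ) ^ k • f x :=
        Finset.sum_comm' fun k x => by simp only [Finset.mem_filter]; tauto
    _ = 0 := Finset.sum_eq_zero fun x hx => by
        rw [← Finset.sum_smul, sum_neg_one_pow_isVShapedAt_eq_zero (hw x hx), zero_smul]

end VShaped

section ReversePrefix

variable {m k : ℕ}

/-- The permutation of `Fin m` reversing the first `k` elements. The subtraction in `k - 1 - i`
never truncates, as it is only used for `i < k`. -/
def reversePrefix (hk : k ≤ m) : Equiv.Perm (Fin m) :=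
  Function.Involutive.toPerm
    (fun i => if h : (i : ℕ) < k then ⟨k - 1 - i, by lia⟩ else i)
    (fun i => by ext; dsimp only; split_ifs <;> grind)

theorem reversePrefix_apply (hk : k ≤ m) (i : Fin m) :
    reversePrefix hk i = if h : (i : ℕ) < k then ⟨k - 1 - i, by lia⟩ else i :=
  rfl

theorem reversePrefix_reversePrefix (hk : k ≤ m) (i : Fin m) :
    reversePrefix hk (reversePrefix hk i) = i :=
  (reversePrefix hk).symm_apply_apply i

theorem coe_reversePrefix_of_lt (hk : k ≤ m) {i : Fin m} (hi : (i : ℕ) < k) :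
    (reversePrefix hk i : ℕ) = k - 1 - i := by
  rw [reversePrefix_apply, dif_pos hi]

theorem eqOn_reversePrefix_id (hk : k ≤ m) :
    Set.EqOn (reversePrefix hk) id {i | k ≤ (i : ℕ)} := fun i hi => by
  rw [reversePrefix_apply, dif_neg (not_lt.2 hi), id]

theorem mapsTo_reversePrefix (hk : k ≤ m) :
    Set.MapsTo (reversePrefix hk) {i | (i : ℕ) < k} {i | (i : ℕ) < k} := fun i (hi : i < k) => by
  rw [Set.mem_ofPred_eq, coe_reversePrefix_of_lt hk hi]
  lia

theorem strictAntiOn_reversePrefix (hk : k ≤ m) :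
    StrictAntiOn (reversePrefix hk) {i | (i : ℕ) < k} := fun i hi j hj hij => by
  rw [Fin.lt_def, coe_reversePrefix_of_lt hk hi, coe_reversePrefix_of_lt hk hj]
  grind

theorem isVShapedAt_comp_reversePrefix {α : Type*} [Preorder α] (hk : k ≤ m) {w : Fin m → α} :
    IsVShapedAt (w ∘ reversePrefix hk) k ↔
      StrictMonoOn w {i | (i : ℕ) < k} ∧ StrictMonoOn w {i | k ≤ (i : ℕ)} := by
  have hprefix : StrictAntiOn (w ∘ reversePrefix hk) {i | (i : ℕ) < k} ↔
      StrictMonoOn w {i | (i : ℕ) < k} := by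
    refine ⟨fun h => ?_,
      fun h => h.comp_strictAntiOn (strictAntiOn_reversePrefix hk) (mapsTo_reversePrefix hk)⟩
    have hw : (w ∘ reversePrefix hk) ∘ reversePrefix hk = w :=
      funext fun i => congrArg w (reversePrefix_reversePrefix hk i)
    exact hw ▸ h.comp (strictAntiOn_reversePrefix hk) (mapsTo_reversePrefix hk)
  exact and_congr hprefix ((eqOn_reversePrefix_id hk).comp_left (g := w)).congr_strictMonoOn

theorem mem_shuffles_iff_strictMonoOn {σ : Equiv.Perm (Fin m)} :
    σ ∈ shuffles m k ↔
      StrictMonoOn ⇑σ⁻¹ {i | (i : ℕ) < k} ∧ StrictMonoOn ⇑σ⁻¹ {i | k ≤ (i : ℕ)} := by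
  simp only [shuffles, Finset.mem_filter, Finset.mem_univ, true_and]
  exact and_congr
    ⟨fun h i _ j hj hij => h i j hij hj, fun h i j hij hj => h (hij.trans hj) hj hij⟩
    ⟨fun h i hi j _ hij => h i j hij hi, fun h i j hij hi => h hi (hi.trans hij.le) hij⟩

theorem isVShapedAt_inv_reversePrefix_mul (hk : k ≤ m) {σ : Equiv.Perm (Fin m)} :
    IsVShapedAt ⇑(reversePrefix hk * σ)⁻¹ k ↔ σ ∈ shuffles m k :=
  (isVShapedAt_comp_reversePrefix hk (w := ⇑σ⁻¹)).trans mem_shuffles_iff_strictMonoOn.symm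

open scoped Classical in
theorem sum_shuffles_reversePrefix_mul {M : Type*} [AddCommMonoid M] (hk : k ≤ m)
    (f : Equiv.Perm (Fin m) → M) :
    ∑ σ ∈ shuffles m k, f (reversePrefix hk * σ) =
      ∑ τ with IsVShapedAt (τ⁻¹ : Equiv.Perm (Fin m)) k, f τ :=
  Finset.sum_equiv (Equiv.mulLeft (reversePrefix hk))
    (fun σ => by
      rw [Finset.mem_filter_univ, Equiv.coe_mulLeft, isVShapedAt_inv_reversePrefix_mul])
    (fun _ _ => rfl)

end ReversePrefix

/-- In the free abelian group on `m`-tuples of elements of `X`: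
`Σ_{k=0}^{m} (−1)^k Σ_{σ ∈ Σ_{k,m−k}} (b^{(k)}_{σ(1)},…,b^{(k)}_{σ(m)}) = 0`,
where `b^{(k)}` is obtained from `(a_1,…,a_m)` by reversing the first `k` entries. -/
theorem stmt11 (m : ℕ) (hm : 1 ≤ m) (X : Type*) (a : Fin m → X)
    (b : ℕ → Fin m → X)
    (hb : ∀ k : ℕ, ∀ _hk : k ≤ m, ∀ i : Fin m,
      b k i = if h : (i : ℕ) < k then a ⟨k - 1 - (i : ℕ), by omega⟩ else a i) :
    ∑ k ∈ Finset.range (m + 1), (-1 : ℤ) ^ k •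
        ∑ σ ∈ shuffles m k, FreeAbelianGroup.of (fun i => b k (σ i)) = 0 := by
  classical
  have : NeZero m := ⟨Nat.one_le_iff_ne_zero.1 hm⟩
  let f (τ : Equiv.Perm (Fin m)) : FreeAbelianGroup (Fin m → X) := .of fun i => a (τ i)
  have hf {k : ℕ} (hk : k ≤ m) (σ : Equiv.Perm (Fin m)) :
      FreeAbelianGroup.of (fun i => b k (σ i)) = f (reversePrefix hk * σ) :=
    congrArg _ <| funext fun i => by
      rw [hb k hk, Equiv.Perm.mul_apply, reversePrefix_apply, apply_dite a]
  calc ∑ k ∈ Finset.range (m + 1), (-1 : ℤ) ^ k •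
        ∑ σ ∈ shuffles m k, FreeAbelianGroup.of (fun i => b k (σ i))
      = ∑ k ∈ Finset.range (m + 1), (-1 : ℤ) ^ k •
          ∑ τ with IsVShapedAt (τ⁻¹ : Equiv.Perm (Fin m)) k, f τ :=
        Finset.sum_congr rfl fun k hk => by
          have hkm : k ≤ m := Nat.lt_succ_iff.1 (Finset.mem_range.1 hk)
          simp only [hf hkm, sum_shuffles_reversePrefix_mul hkm]
    _ = 0 := sum_neg_one_pow_smul_sum_isVShapedAt_eq_zero _ (fun τ _ => τ⁻¹.injective) f
end

section
/- For ε ∈ (0,1) let Li_{1,1}(1−ε, 1−ε) := Σ_{0<k<l} (1−ε)^{k+l}/(k·l) (an absolutely convergent series). Then lim_{ε→0⁺} ( Li_{1,1}(1−ε, 1−ε) − (log ε)²/2 ) = −π²/12. -/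
open Filter

/-- `Li_{1,1}(x,x) = Σ_{0<k<l} x^{k+l}/(kl)` for `0 < x < 1`. -/
noncomputable def Li11 (x : ℝ) : ℝ :=
  ∑' q : {q : ℕ × ℕ // 0 < q.1 ∧ q.1 < q.2}, x ^ (q.1.1 + q.1.2) / (q.1.1 * q.1.2)

/-!
Squaring `-log (1 - x) = ∑ xⁿ / n` and splitting the double series into its diagonal and its two
equal triangular halves gives the stuffle relation
`log (1 - x) ^ 2 = Li₂ (x ^ 2) + 2 * Li_{1,1} (x, x)`. At `x = 1 - ε` the logarithmic divergence of
`Li_{1,1}` is therefore exactly `(log ε) ^ 2 / 2`, and the remainder `-Li₂ ((1 - ε) ^ 2) / 2` tends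
to `-Li₂ 1 / 2 = -π ^ 2 / 12`, since `Li₂` is continuous up to the unit circle.
-/

open Set Topology

section DiagonalSplitting

variable {ι : Type*} [LinearOrder ι]

theorem compl_diagonal_eq_lt_union_swap_image_lt :
    (diagonal ι)ᶜ = {q | q.1 < q.2} ∪ Prod.swap '' {q | q.1 < q.2} := by
  ext ⟨i, j⟩
  simp [lt_or_lt_iff_ne]

theorem disjoint_lt_swap_image_lt :
    Disjoint {q : ι × ι | q.1 < q.2} (Prod.swap '' {q | q.1 < q.2}) := by
  rw [disjoint_right]
  rintro _ ⟨q, hq, rfl⟩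
  exact lt_asymm hq

theorem tsum_prod_eq_tsum_diag_add_tsum_lt_add_tsum_swap {E : Type*} [AddCommGroup E]
    [UniformSpace E] [IsUniformAddGroup E] [CompleteSpace E] [T2Space E] {f : ι × ι → E}
    (hf : Summable f) :
    ∑' q, f q = ∑' i, f (i, i) +
      (∑' q : {q : ι × ι // q.1 < q.2}, f q + ∑' q : {q : ι × ι // q.1 < q.2}, f q.1.swap) := by
  have hdiag : ∑' q : diagonal ι, f q = ∑' i, f (i, i) := by
    rw [← range_diag, tsum_range f Function.diag_injective]
    rfl
  have hoff : ∑' q : ↥(diagonal ι)ᶜ, f q =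
      ∑' q : {q : ι × ι // q.1 < q.2}, f q + ∑' q : {q : ι × ι // q.1 < q.2}, f q.1.swap := by
    rw [compl_diagonal_eq_lt_union_swap_image_lt,
      (hf.subtype _).tsum_union_disjoint disjoint_lt_swap_image_lt (hf.subtype _),
      tsum_image f Prod.swap_injective.injOn]
    rfl
  rw [← hdiag, ← hoff, (hf.subtype _).tsum_add_tsum_compl (hf.subtype _)]

theorem tsum_sq_eq_tsum_sq_add_two_mul_tsum_lt {R : Type*} [NormedCommRing R] [CompleteSpace R]
    {a : ι → R} (ha : Summable fun i => ‖a i‖) :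
    (∑' i, a i) ^ 2 =
      ∑' i, a i ^ 2 + 2 * ∑' q : {q : ι × ι // q.1 < q.2}, a q.1.1 * a q.1.2 := by
  have hprod : Summable fun q : ι × ι => a q.1 * a q.2 := summable_mul_of_summable_norm ha ha
  have hsymm : ∑' q : {q : ι × ι // q.1 < q.2}, a q.1.2 * a q.1.1 =
      ∑' q : {q : ι × ι // q.1 < q.2}, a q.1.1 * a q.1.2 :=
    tsum_congr fun _ => mul_comm _ _
  calc (∑' i, a i) ^ 2
      = ∑' q : ι × ι, a q.1 * a q.2 := by rw [sq, tsum_mul_tsum_of_summable_norm ha ha]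
    _ = ∑' i, a i * a i + (∑' q : {q : ι × ι // q.1 < q.2}, a q.1.1 * a q.1.2 +
          ∑' q : {q : ι × ι // q.1 < q.2}, a q.1.2 * a q.1.1) :=
        tsum_prod_eq_tsum_diag_add_tsum_lt_add_tsum_swap hprod
    _ = ∑' i, a i ^ 2 + 2 * ∑' q : {q : ι × ι // q.1 < q.2}, a q.1.1 * a q.1.2 := by
        simp only [hsymm, ← two_mul, ← sq]

end DiagonalSplitting

section Dilogarithm

variable {𝕜 : Type*} [RCLike 𝕜]

/-- The dilogarithm `Li₂ z = ∑_{n ≥ 1} zⁿ / n²` on the closed unit disc, whose value at `1` is the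
limit of the diagonal part of the squared logarithm series. The sum runs over all of `ℕ`; the term
at `n = 0` is `1 / 0 = 0`. -/
noncomputable def dilog (z : 𝕜) : 𝕜 :=
  ∑' n : ℕ, z ^ n / (n : 𝕜) ^ 2

theorem continuousOn_dilog : ContinuousOn (dilog : 𝕜 → 𝕜) (Metric.closedBall 0 1) := by
  refine continuousOn_tsum (fun n => by fun_prop) hasSum_zeta_two.summable fun n z hz => ?_
  rw [norm_div, norm_pow, norm_pow, RCLike.norm_natCast]
  gcongr
  exact pow_le_one₀ (norm_nonneg z) (mem_closedBall_zero_iff.1 hz)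

theorem dilog_one : dilog (1 : ℝ) = Real.pi ^ 2 / 6 := by
  simpa only [dilog, one_pow] using hasSum_zeta_two.tsum_eq

end Dilogarithm

theorem hasSum_pow_div_neg_log {x : ℝ} (hx : |x| < 1) :
    HasSum (fun n : ℕ => x ^ n / n) (-Real.log (1 - x)) := by
  rw [← hasSum_nat_add_iff' 1]
  simpa using Real.hasSum_pow_div_log_of_abs_lt_one hx

theorem Li11_eq_tsum_lt (x : ℝ) :
    Li11 x = ∑' q : {q : ℕ × ℕ // q.1 < q.2}, x ^ q.1.1 / q.1.1 * (x ^ q.1.2 / q.1.2) := by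
  let f : ℕ × ℕ → ℝ := fun q => x ^ (q.1 + q.2) / (q.1 * q.2)
  -- Pairs with first entry `0` contribute `1 / 0 = 0`.
  have hzero : ∀ q : ℕ × ℕ, q.1 = 0 → f q = 0 := fun q hq => by simp [f, hq]
  calc Li11 x
      = ∑' q, {q : ℕ × ℕ | 0 < q.1 ∧ q.1 < q.2}.indicator f q := tsum_subtype _ f
    _ = ∑' q, {q : ℕ × ℕ | q.1 < q.2}.indicator f q := by
        refine tsum_congr fun q => ?_
        rcases q.1.eq_zero_or_pos with hq | hq
        · simp [indicator_apply, hzero q hq]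
        · simp [indicator_apply, hq]
    _ = ∑' q : {q : ℕ × ℕ // q.1 < q.2}, f q := (tsum_subtype _ f).symm
    _ = ∑' q : {q : ℕ × ℕ // q.1 < q.2}, x ^ q.1.1 / q.1.1 * (x ^ q.1.2 / q.1.2) :=
        tsum_congr fun q => by rw [div_mul_div_comm, ← pow_add]

theorem log_one_sub_sq_eq_dilog_sq_add_two_mul_Li11 {x : ℝ} (hx : |x| < 1) :
    Real.log (1 - x) ^ 2 = dilog (x ^ 2) + 2 * Li11 x := by
  have hnorm : Summable fun n : ℕ => ‖x ^ n / (n : ℝ)‖ := (hasSum_pow_div_neg_log hx).summable.norm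
  have hdiag : ∑' n : ℕ, (x ^ n / (n : ℝ)) ^ 2 = dilog (x ^ 2) :=
    tsum_congr fun n => by rw [div_pow, pow_right_comm]
  rw [← neg_sq, ← (hasSum_pow_div_neg_log hx).tsum_eq,
    tsum_sq_eq_tsum_sq_add_two_mul_tsum_lt hnorm, hdiag, Li11_eq_tsum_lt]

theorem tendsto_dilog_one_sub_sq :
    Tendsto (fun ε : ℝ => dilog ((1 - ε) ^ 2)) (𝓝[>] 0) (𝓝 (Real.pi ^ 2 / 6)) := by
  have harg : Tendsto (fun ε : ℝ => (1 - ε) ^ 2) (𝓝[>] 0) (𝓝 1) := by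
    have hcont : Continuous fun ε : ℝ => (1 - ε) ^ 2 := by fun_prop
    simpa using (hcont.tendsto 0).mono_left nhdsWithin_le_nhds
  have hmem : ∀ᶠ ε : ℝ in 𝓝[>] 0, (1 - ε) ^ 2 ∈ Metric.closedBall (0 : ℝ) 1 := by
    filter_upwards [Ioo_mem_nhdsGT zero_lt_one] with ε hε
    rw [mem_closedBall_zero_iff, Real.norm_of_nonneg (sq_nonneg _)]
    exact pow_le_one₀ (by linarith [hε.2]) (by linarith [hε.1])
  rw [← dilog_one]
  exact (continuousOn_dilog 1 (by simp)).tendsto.comp (tendsto_nhdsWithin_iff.2 ⟨harg, hmem⟩)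

/-- `lim_{ε→0⁺} ( Li_{1,1}(1−ε,1−ε) − (log ε)²/2 ) = −π²/12`. -/
theorem stmt13 :
    Tendsto (fun ε : ℝ => Li11 (1 - ε) - (Real.log ε) ^ 2 / 2)
      (nhdsWithin 0 (Set.Ioi 0)) (nhds (-(Real.pi ^ 2 / 12))) := by
  have hstuffle : ∀ᶠ ε : ℝ in 𝓝[>] 0,
      -(dilog ((1 - ε) ^ 2) / 2) = Li11 (1 - ε) - Real.log ε ^ 2 / 2 := by
    filter_upwards [Ioo_mem_nhdsGT zero_lt_one] with ε hε
    have habs : |1 - ε| < 1 := abs_lt.2 ⟨by linarith [hε.2], by linarith [hε.1]⟩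
    have hlog := log_one_sub_sq_eq_dilog_sq_add_two_mul_Li11 habs
    rw [sub_sub_cancel] at hlog
    linarith
  have hlimit : -(Real.pi ^ 2 / 12) = -(Real.pi ^ 2 / 6 / 2) := by ring
  rw [hlimit]
  exact (tendsto_dilog_one_sub_sq.div_const 2).neg.congr' hstuffle
end

section
/- Let m ≥ 1 and n_1,…,n_m ≥ 1 be integers with n_m ≥ 2, and set w := n_1+⋯+n_m. For j = 1,…,w define f_j : ℝ → ℝ by f_j(t) = 1/(1−t) if j = n_1+⋯+n_{i−1}+1 for some i ∈ {1,…,m}, and f_j(t) = 1/t otherwise. Then the integrand ∏_{j=1}^{w} f_j(t_j) is integrable on the open simplex {0 < t_1 < ⋯ < t_w < 1} ⊂ ℝ^w and ζ(n_1,…,n_m) = ∫_{0<t_1<⋯<t_w<1} ∏_{j=1}^{w} f_j(t_j) dt_1⋯dt_w. -/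
open MeasureTheory

/-- The multiple zeta value `ζ(n_1,…,n_m) = Σ_{0<k_1<⋯<k_m} 1/(k_1^{n_1}⋯k_m^{n_m})`. -/
noncomputable def mzv (p : ℕ) (n : Fin p → ℕ) : ℝ :=
  ∑' k : {k : Fin p → ℕ // StrictMono k ∧ ∀ i, 0 < k i},
    ∏ i, (((k.1 i : ℝ)) ^ (n i))⁻¹

/-!
Grow the simplex one variable at a time. As a function of the upper limit `x`, the integral of the
first `w` forms is a power series: multiplying by `1 / t` and integrating divides the coefficient
of `x ^ k` by `k`, and since `1 / (1 - t)` is `1 / t` times `t + t ^ 2 + ⋯`, a form `1 / (1 - t)`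
first replaces each coefficient by the sum of the preceding ones. A block of length `n_i` thus maps
a sequence `c` to `k ↦ k ^ (-n_i) * ∑ j < k, c j`, which is also the recursion satisfied by nested
sums when their largest index is singled out, so the value at `x = 1` is the zeta value.
Everything is computed in `[0, ∞]`, where sums and integrals commute; the common value is finite
because `n_m ≥ 2` leaves a spare factor `1 / k_m ≤ ∏ i, k_i ^ (-1 / m)`.
-/

open scoped ENNReal

/-- The strictly increasing `w`-tuples with entries in `I`: an open simplex when `I` is a real
interval, the summation range of a multiple zeta value when `I` is a set of natural numbers. -/
def increasingTuples {α : Type*} [Preorder α] (w : ℕ) (I : Set α) : Set (Fin w → α) :=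
  {t | StrictMono t ∧ ∀ j, t j ∈ I}

theorem snoc_mem_increasingTuples_iff {α : Type*} [Preorder α] {w : ℕ} {I : Set α}
    {t : Fin w → α} {u : α} :
    (Fin.snoc t u : Fin (w + 1) → α) ∈ increasingTuples (w + 1) I ↔
      u ∈ I ∧ t ∈ increasingTuples w (I ∩ Set.Iio u) := by
  simp only [increasingTuples, Set.mem_ofPred_eq, Fin.forall_fin_succ', Fin.snoc_castSucc,
    Fin.snoc_last, Set.mem_inter_iff, Set.mem_Iio]
  constructor
  · rintro ⟨hs, ht, hu⟩
    refine ⟨hu, fun i j hij => ?_, fun j => ⟨ht j, ?_⟩⟩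
    · simpa using hs (Fin.castSucc_lt_castSucc_iff.2 hij)
    · simpa using hs (Fin.castSucc_lt_last j)
  · rintro ⟨hu, hs, ht⟩
    refine ⟨fun i j hij => ?_, fun j => (ht j).1, hu⟩
    obtain ⟨i, rfl⟩ := Fin.exists_castSucc_eq.2 (hij.trans_le (Fin.le_last j)).ne
    induction j using Fin.lastCases with
    | last => simpa using (ht i).2
    | cast j => simpa using hs (Fin.castSucc_lt_castSucc_iff.1 hij)

theorem lintegral_pi_fin_succ {α : Type*} [MeasurableSpace α] (μ : Measure α) [SigmaFinite μ]
    {w : ℕ} {F : (Fin (w + 1) → α) → ℝ≥0∞} (hF : Measurable F) :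
    ∫⁻ t, F t ∂Measure.pi (fun _ => μ) =
      ∫⁻ u, ∫⁻ t, F (Fin.snoc t u : Fin (w + 1) → α) ∂Measure.pi (fun _ => μ) ∂μ := by
  have e := (measurePreserving_piFinSuccAbove (fun _ => μ) (Fin.last w)).symm
  rw [← e.lintegral_comp hF, lintegral_prod]
  · simp [Fin.insertNthEquiv, Fin.insertNth_last']
  · exact (hF.comp (MeasurableEquiv.measurable _)).aemeasurable

/-- The iterated integral `∫ ∏ j, g j (t j)` over the increasing `w`-tuples `t` in `I`. Taking `μ`
to be Lebesgue measure gives simplex integrals, counting measure gives nested sums. -/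
noncomputable def orderedLIntegral {α : Type*} [Preorder α] [MeasurableSpace α] (μ : Measure α)
    (g : ℕ → α → ℝ≥0∞) (w : ℕ) (I : Set α) : ℝ≥0∞ :=
  ∫⁻ t in increasingTuples w I, ∏ j : Fin w, g j (t j) ∂Measure.pi fun _ => μ

theorem orderedLIntegral_zero {α : Type*} [Preorder α] [MeasurableSpace α] (μ : Measure α)
    (g : ℕ → α → ℝ≥0∞) (I : Set α) : orderedLIntegral μ g 0 I = 1 := by
  have huniv : increasingTuples 0 I = Set.univ :=
    Set.eq_univ_of_forall fun _ => ⟨Subsingleton.strictMono _, fun j => j.elim0⟩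
  simp [orderedLIntegral, huniv]

theorem measurable_prod_apply {α M : Type*} [MeasurableSpace α] [CommMonoid M]
    [MeasurableSpace M] [MeasurableMul₂ M] {g : ℕ → α → M} (hg : ∀ j, Measurable (g j)) (w : ℕ) :
    Measurable fun t : Fin w → α => ∏ j : Fin w, g j (t j) :=
  Finset.measurable_fun_prod _ fun j _ => (hg j).comp (measurable_pi_apply j)

section OrderedIntegrals

variable {α : Type*} [LinearOrder α] [TopologicalSpace α] [OrderClosedTopology α]
  [SecondCountableTopology α] [MeasurableSpace α] [OpensMeasurableSpace α]

theorem measurableSet_increasingTuples (w : ℕ) {I : Set α} (hI : MeasurableSet I) :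
    MeasurableSet (increasingTuples w I) := by
  have : increasingTuples w I =
      (⋂ i, ⋂ j, ⋂ _ : i < j, {t : Fin w → α | t i < t j}) ∩ ⋂ j, {t | t j ∈ I} := by
    ext t
    simp [increasingTuples, StrictMono]
  rw [this]
  refine .inter (.iInter fun i => .iInter fun j => .iInter fun _ => ?_) (.iInter fun j => ?_)
  · exact measurableSet_lt (measurable_pi_apply i) (measurable_pi_apply j)
  · exact measurable_pi_apply j hI

theorem orderedLIntegral_succ (μ : Measure α) [SigmaFinite μ] {g : ℕ → α → ℝ≥0∞}
    (hg : ∀ j, Measurable (g j)) (w : ℕ) {I : Set α} (hI : MeasurableSet I) :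
    orderedLIntegral μ g (w + 1) I =
      ∫⁻ u in I, g w u * orderedLIntegral μ g w (I ∩ Set.Iio u) ∂μ := by
  classical
  have hprod := measurable_prod_apply hg
  have hset (v : ℕ) {J : Set α} (hJ : MeasurableSet J) := measurableSet_increasingTuples v hJ
  rw [orderedLIntegral, ← lintegral_indicator (hset _ hI),
    lintegral_pi_fin_succ μ ((hprod _).indicator (hset _ hI)), ← lintegral_indicator hI]
  refine lintegral_congr fun u => ?_
  have hJ := hset w (hI.inter (measurableSet_Iio (a := u)))
  by_cases hu : u ∈ I
  · rw [Set.indicator_of_mem hu, orderedLIntegral, ← lintegral_indicator hJ,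
      ← lintegral_const_mul _ ((hprod _).indicator hJ)]
    refine lintegral_congr fun t => ?_
    simp [Set.indicator_apply, snoc_mem_increasingTuples_iff, hu, Fin.prod_univ_castSucc,
      mul_comm]
  · simp [snoc_mem_increasingTuples_iff, hu]

theorem setLIntegral_ofReal_prod (μ : Measure α) (g : ℕ → α → ℝ) (w : ℕ) {I : Set α}
    (hI : MeasurableSet I) (hg : ∀ j, ∀ x ∈ I, 0 ≤ g j x) :
    ∫⁻ t in increasingTuples w I, ENNReal.ofReal (∏ j : Fin w, g j (t j))
        ∂(Measure.pi fun _ => μ) =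
      orderedLIntegral μ (fun j x => ENNReal.ofReal (g j x)) w I :=
  setLIntegral_congr_fun (measurableSet_increasingTuples w hI) fun t ht =>
    ENNReal.ofReal_prod_of_nonneg fun j _ => hg j (t j) (ht.2 j)

theorem ae_restrict_increasingTuples_prod_nonneg (μ : Measure α) {g : ℕ → α → ℝ} {w : ℕ}
    {I : Set α} (hI : MeasurableSet I) (hg : ∀ j, ∀ x ∈ I, 0 ≤ g j x) :
    0 ≤ᵐ[(Measure.pi fun _ => μ).restrict (increasingTuples w I)]
      fun t => ∏ j : Fin w, g j (t j) :=
  (ae_restrict_mem (measurableSet_increasingTuples w hI)).mono fun t ht =>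
    Finset.prod_nonneg fun j _ => hg j (t j) (ht.2 j)

theorem integrableOn_increasingTuples_prod (μ : Measure α) {g : ℕ → α → ℝ}
    (hgm : ∀ j, Measurable (g j)) {w : ℕ} {I : Set α} (hI : MeasurableSet I)
    (hg : ∀ j, ∀ x ∈ I, 0 ≤ g j x)
    (hfin : orderedLIntegral μ (fun j x => ENNReal.ofReal (g j x)) w I ≠ ∞) :
    IntegrableOn (fun t : Fin w → α => ∏ j : Fin w, g j (t j)) (increasingTuples w I)
      (Measure.pi fun _ => μ) := by
  refine ⟨(measurable_prod_apply hgm w).aestronglyMeasurable, ?_⟩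
  rw [hasFiniteIntegral_iff_ofReal (ae_restrict_increasingTuples_prod_nonneg μ hI hg),
    setLIntegral_ofReal_prod μ g w hI hg]
  exact hfin.lt_top

theorem setIntegral_increasingTuples_prod (μ : Measure α) {g : ℕ → α → ℝ}
    (hgm : ∀ j, Measurable (g j)) {w : ℕ} {I : Set α} (hI : MeasurableSet I)
    (hg : ∀ j, ∀ x ∈ I, 0 ≤ g j x) :
    ∫ t in increasingTuples w I, ∏ j : Fin w, g j (t j) ∂(Measure.pi fun _ => μ) =
      (orderedLIntegral μ (fun j x => ENNReal.ofReal (g j x)) w I).toReal := by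
  rw [← setLIntegral_ofReal_prod μ g w hI hg]
  exact integral_eq_lintegral_of_nonneg_ae (ae_restrict_increasingTuples_prod_nonneg μ hI hg)
    (measurable_prod_apply hgm w).aestronglyMeasurable

end OrderedIntegrals

theorem ennreal_tsum_mul_tsum_eq_tsum_sum_range (f g : ℕ → ℝ≥0∞) :
    (∑' k, f k) * ∑' k, g k = ∑' k, ∑ i ∈ Finset.range (k + 1), f i * g (k - i) := by
  simp_rw [← Finset.Nat.sum_antidiagonal_eq_sum_range_succ fun i j => f i * g j,
    ← ENNReal.tsum_mul_right, ← ENNReal.tsum_mul_left]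
  rw [← ENNReal.tsum_prod (f := fun i j => f i * g j),
    ← Finset.HasAntidiagonal.sigmaAntidiagonalEquivProd.tsum_eq, ENNReal.tsum_sigma']
  refine tsum_congr fun k => ?_
  rw [tsum_fintype, ← Finset.sum_coe_sort (Finset.HasAntidiagonal.antidiagonal k)]
  rfl

theorem ofReal_inv_mul_ofReal_pow_succ {t : ℝ} (ht : 0 < t) (k : ℕ) :
    ENNReal.ofReal t⁻¹ * ENNReal.ofReal t ^ (k + 1) = ENNReal.ofReal t ^ k := by
  rw [pow_succ', ← mul_assoc, ← ENNReal.ofReal_mul (inv_nonneg.2 ht.le), inv_mul_cancel₀ ht.ne',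
    ENNReal.ofReal_one, one_mul]

theorem ofReal_one_sub_inv_mul_tsum (c : ℕ → ℝ≥0∞) {t : ℝ} (ht : t ∈ Set.Ioo 0 1) :
    ENNReal.ofReal (1 - t)⁻¹ * ∑' k, c k * ENNReal.ofReal t ^ k =
      ENNReal.ofReal t⁻¹ * ∑' k, (∑ i ∈ Finset.range k, c i) * ENNReal.ofReal t ^ k := by
  have hgeom : ENNReal.ofReal (1 - t)⁻¹ = ∑' k, ENNReal.ofReal t ^ k := by
    rw [ENNReal.tsum_geometric, ENNReal.ofReal_inv_of_pos (sub_pos.2 ht.2),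
      ENNReal.ofReal_sub _ ht.1.le, ENNReal.ofReal_one]
  have hcauchy (k : ℕ) :
      ∑ i ∈ Finset.range (k + 1), c i * ENNReal.ofReal t ^ i * ENNReal.ofReal t ^ (k - i) =
        (∑ i ∈ Finset.range (k + 1), c i) * ENNReal.ofReal t ^ k := by
    rw [Finset.sum_mul]
    refine Finset.sum_congr rfl fun i hi => ?_
    rw [mul_assoc, ← pow_add, Nat.add_sub_cancel' (Finset.mem_range_succ_iff.1 hi)]
  calc ENNReal.ofReal (1 - t)⁻¹ * ∑' k, c k * ENNReal.ofReal t ^ k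
      = ∑' k, (∑ i ∈ Finset.range (k + 1), c i) * ENNReal.ofReal t ^ k := by
        simp_rw [hgeom, mul_comm (∑' k, ENNReal.ofReal t ^ k),
          ennreal_tsum_mul_tsum_eq_tsum_sum_range, hcauchy]
    _ = ENNReal.ofReal t⁻¹ *
          ∑' k, (∑ i ∈ Finset.range (k + 1), c i) * ENNReal.ofReal t ^ (k + 1) := by
        simp_rw [← ENNReal.tsum_mul_left, mul_left_comm (ENNReal.ofReal t⁻¹),
          ofReal_inv_mul_ofReal_pow_succ ht.1]
    _ = ENNReal.ofReal t⁻¹ * ∑' k, (∑ i ∈ Finset.range k, c i) * ENNReal.ofReal t ^ k := by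
        conv_rhs =>
          rw [tsum_eq_zero_add' ENNReal.summable, Finset.sum_range_zero, zero_mul, zero_add]

theorem setLIntegral_Ioo_ofReal_pow {x : ℝ} (hx : 0 ≤ x) (k : ℕ) :
    ∫⁻ t in Set.Ioo 0 x, ENNReal.ofReal t ^ k =
      ((k + 1 : ℕ) : ℝ≥0∞)⁻¹ * ENNReal.ofReal x ^ (k + 1) := by
  have hpow : ∫⁻ t in Set.Ioo 0 x, ENNReal.ofReal t ^ k =
      ∫⁻ t in Set.Ioo 0 x, ENNReal.ofReal (t ^ k) :=
    setLIntegral_congr_fun measurableSet_Ioo fun t ht => (ENNReal.ofReal_pow ht.1.le k).symm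
  have hint : IntegrableOn (fun t : ℝ => t ^ k) (Set.Ioo 0 x) :=
    (continuous_pow k).integrableOn_Icc.mono_set Set.Ioo_subset_Icc_self
  have hnonneg : 0 ≤ᵐ[volume.restrict (Set.Ioo 0 x)] fun t : ℝ => t ^ k :=
    (ae_restrict_mem measurableSet_Ioo).mono fun t ht => pow_nonneg ht.1.le k
  rw [hpow, ← ofReal_integral_eq_lintegral_ofReal hint hnonneg, ← integral_Ioc_eq_integral_Ioo,
    ← intervalIntegral.integral_of_le hx, integral_pow, zero_pow k.succ_ne_zero, sub_zero,
    div_eq_inv_mul, ENNReal.ofReal_mul (by positivity), ENNReal.ofReal_pow hx,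
    ENNReal.ofReal_inv_of_pos (by positivity), ← Nat.cast_succ, ENNReal.ofReal_natCast]

theorem setLIntegral_ofReal_inv_mul_tsum {x : ℝ} (hx : 0 ≤ x) {c : ℕ → ℝ≥0∞} (hc : c 0 = 0) :
    ∫⁻ t in Set.Ioo 0 x, ENNReal.ofReal t⁻¹ * ∑' k, c k * ENNReal.ofReal t ^ k =
      ∑' k : ℕ, (k : ℝ≥0∞)⁻¹ * c k * ENNReal.ofReal x ^ k := by
  simp_rw [← ENNReal.tsum_mul_left]
  rw [lintegral_tsum fun k => by fun_prop]
  refine tsum_congr fun k => ?_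
  cases k with
  | zero => simp [hc]
  | succ k =>
    calc ∫⁻ t in Set.Ioo 0 x, ENNReal.ofReal t⁻¹ * (c (k + 1) * ENNReal.ofReal t ^ (k + 1))
        = ∫⁻ t : ℝ in Set.Ioo 0 x, c (k + 1) * ENNReal.ofReal t ^ k :=
          setLIntegral_congr_fun measurableSet_Ioo fun t ht => by
            simp only [mul_left_comm _ (c (k + 1)), ofReal_inv_mul_ofReal_pow_succ ht.1]
      _ = ((k + 1 : ℕ) : ℝ≥0∞)⁻¹ * c (k + 1) * ENNReal.ofReal x ^ (k + 1) := by
          rw [lintegral_const_mul _ (by fun_prop), setLIntegral_Ioo_ofReal_pow hx, mul_left_comm,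
            mul_assoc]

open Classical in
/-- The `j`-th form of the word in `1 / (1 - t)` and `1 / t` whose letters `1 / (1 - t)` are at the
positions in `B`. -/
noncomputable def wordForm (B : Set ℕ) (j : ℕ) (t : ℝ) : ℝ :=
  if j ∈ B then (1 - t)⁻¹ else t⁻¹

theorem measurable_wordForm (B : Set ℕ) (j : ℕ) : Measurable (wordForm B j) := by
  unfold wordForm
  split_ifs <;> fun_prop

theorem wordForm_nonneg (B : Set ℕ) (j : ℕ) {t : ℝ} (ht : t ∈ Set.Ioo 0 1) :
    0 ≤ wordForm B j t := by
  unfold wordForm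
  split_ifs
  exacts [inv_nonneg.2 (sub_nonneg.2 ht.2.le), inv_nonneg.2 ht.1.le]

open Classical in
/-- The coefficient of `x ^ k` in the iterated integral over `0 < t_1 < ⋯ < t_w < x` of the first
`w` letters of the word `B`. -/
noncomputable def wordCoeff (B : Set ℕ) : ℕ → ℕ → ℝ≥0∞
  | 0, k => if k = 0 then 1 else 0
  | w + 1, k =>
    (k : ℝ≥0∞)⁻¹ * if w ∈ B then ∑ i ∈ Finset.range k, wordCoeff B w i else wordCoeff B w k

theorem wordCoeff_succ_of_mem {B : Set ℕ} {w : ℕ} (hw : w ∈ B) (k : ℕ) :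
    wordCoeff B (w + 1) k = (k : ℝ≥0∞)⁻¹ * ∑ i ∈ Finset.range k, wordCoeff B w i := by
  rw [wordCoeff, if_pos hw]

theorem wordCoeff_succ_of_notMem {B : Set ℕ} {w : ℕ} (hw : w ∉ B) (k : ℕ) :
    wordCoeff B (w + 1) k = (k : ℝ≥0∞)⁻¹ * wordCoeff B w k := by
  rw [wordCoeff, if_neg hw]

theorem wordCoeff_succ_zero {B : Set ℕ} (h0 : 0 ∈ B) (w : ℕ) : wordCoeff B (w + 1) 0 = 0 := by
  induction w with
  | zero => simp [wordCoeff_succ_of_mem h0]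
  | succ w ih =>
    by_cases hw : w + 1 ∈ B
    · simp [wordCoeff_succ_of_mem hw]
    · simp [wordCoeff_succ_of_notMem hw, ih]

theorem setLIntegral_wordForm_mul_tsum {B : Set ℕ} (h0 : 0 ∈ B) (w : ℕ) {x : ℝ}
    (hx : x ∈ Set.Icc (0 : ℝ) 1) :
    ∫⁻ u in Set.Ioo 0 x, ENNReal.ofReal (wordForm B w u) *
        ∑' k, wordCoeff B w k * ENNReal.ofReal u ^ k =
      ∑' k, wordCoeff B (w + 1) k * ENNReal.ofReal x ^ k := by
  by_cases hw : w ∈ B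
  · simp only [wordForm, if_pos hw, wordCoeff_succ_of_mem hw]
    rw [← setLIntegral_ofReal_inv_mul_tsum hx.1
      (c := fun k => ∑ i ∈ Finset.range k, wordCoeff B w i) (Finset.sum_range_zero _)]
    exact setLIntegral_congr_fun measurableSet_Ioo fun u hu =>
      ofReal_one_sub_inv_mul_tsum _ ⟨hu.1, hu.2.trans_le hx.2⟩
  · simp only [wordForm, if_neg hw, wordCoeff_succ_of_notMem hw]
    obtain ⟨v, rfl⟩ := Nat.exists_eq_succ_of_ne_zero (ne_of_mem_of_not_mem h0 hw).symm
    exact setLIntegral_ofReal_inv_mul_tsum hx.1 (wordCoeff_succ_zero h0 v)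

theorem orderedLIntegral_wordForm {B : Set ℕ} (h0 : 0 ∈ B) (w : ℕ) {x : ℝ}
    (hx : x ∈ Set.Icc (0 : ℝ) 1) :
    orderedLIntegral volume (fun j t => ENNReal.ofReal (wordForm B j t)) w (Set.Ioo 0 x) =
      ∑' k, wordCoeff B w k * ENNReal.ofReal x ^ k := by
  induction w generalizing x with
  | zero =>
    rw [orderedLIntegral_zero, tsum_eq_single 0 fun k hk => by simp [wordCoeff, hk]]
    simp [wordCoeff]
  | succ w ih =>
    rw [orderedLIntegral_succ _ (fun j => (measurable_wordForm B j).ennreal_ofReal) _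
      measurableSet_Ioo, ← setLIntegral_wordForm_mul_tsum h0 w hx]
    refine setLIntegral_congr_fun measurableSet_Ioo fun u hu => ?_
    simp only [Set.Ioo_inter_Iio, min_eq_right hu.2.le, ih ⟨hu.1.le, hu.2.le.trans hx.2⟩]

/-- The positions, counted from `0`, at which the blocks of lengths `n 0, n 1, …` start. -/
def blockStarts (n : ℕ → ℕ) : Set ℕ :=
  Set.range fun i => ∑ r ∈ Finset.range i, n r

theorem sum_range_mem_blockStarts (n : ℕ → ℕ) (m : ℕ) :
    ∑ r ∈ Finset.range m, n r ∈ blockStarts n :=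
  Set.mem_range_self m

theorem sum_range_add_succ_notMem_blockStarts (n : ℕ → ℕ) {m p : ℕ} (hp : p + 1 < n m) :
    ∑ r ∈ Finset.range m, n r + (p + 1) ∉ blockStarts n := by
  rintro ⟨i, hi : ∑ r ∈ Finset.range i, n r = _⟩
  rcases le_or_gt i m with him | hmi
  · have := Finset.sum_le_sum_of_subset (f := n) (Finset.range_mono him)
    omega
  · have := Finset.sum_le_sum_of_subset (f := n) (Finset.range_mono (Nat.succ_le_of_lt hmi))
    rw [Nat.succ_eq_add_one, Finset.sum_range_succ] at this
    omega

theorem wordCoeff_blockStarts_add_succ (n : ℕ → ℕ) {m p : ℕ} (hp : p + 1 ≤ n m) (k : ℕ) :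
    wordCoeff (blockStarts n) (∑ r ∈ Finset.range m, n r + (p + 1)) k =
      (k : ℝ≥0∞)⁻¹ ^ (p + 1) *
        ∑ i ∈ Finset.range k, wordCoeff (blockStarts n) (∑ r ∈ Finset.range m, n r) i := by
  induction p with
  | zero => rw [zero_add, pow_one, wordCoeff_succ_of_mem (sum_range_mem_blockStarts n m)]
  | succ p ih =>
    rw [← add_assoc, wordCoeff_succ_of_notMem (sum_range_add_succ_notMem_blockStarts n hp),
      ih (Nat.le_of_succ_le hp), ← mul_assoc, ← pow_succ']

theorem wordCoeff_blockStarts_succ (n : ℕ → ℕ) {m : ℕ} (hm : 1 ≤ n m) (k : ℕ) :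
    wordCoeff (blockStarts n) (∑ r ∈ Finset.range (m + 1), n r) k =
      (k : ℝ≥0∞)⁻¹ ^ n m *
        ∑ i ∈ Finset.range k, wordCoeff (blockStarts n) (∑ r ∈ Finset.range m, n r) i := by
  obtain ⟨p, hp⟩ := Nat.exists_eq_add_of_le' hm
  rw [Finset.sum_range_succ, hp, wordCoeff_blockStarts_add_succ n hp.ge]

/-- The `i`-th factor `k ^ (-n i)` of the summands of a multiple zeta value. -/
noncomputable def zetaFactor (n : ℕ → ℕ) (i k : ℕ) : ℝ :=
  ((k : ℝ) ^ n i)⁻¹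

theorem zetaFactor_nonneg (n : ℕ → ℕ) (i k : ℕ) : 0 ≤ zetaFactor n i k := by
  unfold zetaFactor
  positivity

theorem ofReal_zetaFactor (n : ℕ → ℕ) (i : ℕ) {k : ℕ} (hk : 0 < k) :
    ENNReal.ofReal (zetaFactor n i k) = (k : ℝ≥0∞)⁻¹ ^ n i := by
  rw [zetaFactor, ENNReal.ofReal_inv_of_pos (by positivity), ENNReal.ofReal_pow (by positivity),
    ENNReal.ofReal_natCast, ENNReal.inv_pow]

theorem sum_range_eq_setLIntegral_count (c : ℕ → ℝ≥0∞) (k : ℕ) :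
    ∑ i ∈ Finset.range k, c i = ∫⁻ i in Set.Iio k, c i ∂Measure.count := by
  simp [← Finset.coe_range, lintegral_finset]

-- Lower sets `L` make the induction close up: the inner sum over `j < k` is again of this form.
theorem setLIntegral_count_wordCoeff {n : ℕ → ℕ} (hn : ∀ i, 1 ≤ n i) (m : ℕ) {L : Set ℕ}
    (hL : IsLowerSet L) (h0 : 0 ∈ L) :
    ∫⁻ k in L, wordCoeff (blockStarts n) (∑ r ∈ Finset.range m, n r) k ∂Measure.count =
      orderedLIntegral Measure.count (fun i k => ENNReal.ofReal (zetaFactor n i k)) m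
        (L ∩ Set.Ioi 0) := by
  induction m generalizing L with
  | zero =>
    rw [orderedLIntegral_zero, ← lintegral_indicator .of_discrete, lintegral_count,
      tsum_eq_single 0 fun k hk => by simp [wordCoeff, hk]]
    simp [wordCoeff, h0]
  | succ m ih =>
    rw [orderedLIntegral_succ _ (fun _ => .of_discrete) _ .of_discrete,
      ← lintegral_indicator .of_discrete, ← lintegral_indicator .of_discrete]
    refine lintegral_congr fun k => ?_
    by_cases hk : k ∈ L ∩ Set.Ioi 0
    · have hinter : L ∩ Set.Ioi 0 ∩ Set.Iio k = Set.Iio k ∩ Set.Ioi 0 := by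
        have hsub : Set.Iio k ⊆ L := fun i hi => hL (Set.mem_Iio.1 hi).le hk.1
        rw [Set.inter_right_comm, Set.inter_eq_right.2 hsub]
      rw [Set.indicator_of_mem hk.1, Set.indicator_of_mem hk, hinter,
        ← ih (isLowerSet_Iio k) hk.2, ← sum_range_eq_setLIntegral_count,
        ofReal_zetaFactor n m hk.2, wordCoeff_blockStarts_succ n (hn m)]
    · rw [Set.indicator_of_notMem hk, Set.indicator_apply_eq_zero]
      intro hkL
      obtain rfl : k = 0 := Nat.eq_zero_of_not_pos fun hpos => hk ⟨hkL, hpos⟩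
      simp [wordCoeff_blockStarts_succ n (hn m)]

theorem orderedLIntegral_wordForm_blockStarts {n : ℕ → ℕ} (hn : ∀ i, 1 ≤ n i) (m : ℕ) :
    orderedLIntegral volume (fun j t => ENNReal.ofReal (wordForm (blockStarts n) j t))
        (∑ r ∈ Finset.range m, n r) (Set.Ioo 0 1) =
      orderedLIntegral Measure.count (fun i k => ENNReal.ofReal (zetaFactor n i k)) m
        (Set.Ioi 0) := by
  rw [orderedLIntegral_wordForm (sum_range_mem_blockStarts n 0) _ (Set.right_mem_Icc.2 zero_le_one),
    ← Set.univ_inter (Set.Ioi 0),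
    ← setLIntegral_count_wordCoeff hn m isLowerSet_univ (Set.mem_univ 0)]
  simp [lintegral_count]

section Convergence

variable {ι : Type*} [Fintype ι] {x : ι → ℝ}

theorem prod_mul_le_prod_pow (hx : ∀ i, 1 ≤ x i) {n : ι → ℕ} (hn : ∀ i, 1 ≤ n i) {l : ι}
    (hl : 2 ≤ n l) : (∏ i, x i) * x l ≤ ∏ i, x i ^ n i := by
  classical
  calc (∏ i, x i) * x l = ∏ i, x i * if i = l then x i else 1 := by
        rw [Finset.prod_mul_distrib, Fintype.prod_ite_eq']
    _ ≤ ∏ i, x i ^ n i := by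
        refine Finset.prod_le_prod (fun i _ => ?_) fun i _ => ?_
        · have := hx i
          split_ifs <;> positivity
        · split_ifs with h
          · rw [← pow_two, h]
            exact pow_le_pow_right₀ (hx l) hl
          · simpa using pow_le_pow_right₀ (hx i) (hn i)

theorem prod_rpow_inv_card_le (hx : ∀ i, 0 ≤ x i) {l : ι} (hl : ∀ i, x i ≤ x l) :
    ∏ i, x i ^ (Fintype.card ι : ℝ)⁻¹ ≤ x l := by
  have : Nonempty ι := ⟨l⟩
  calc ∏ i, x i ^ (Fintype.card ι : ℝ)⁻¹ ≤ ∏ _i : ι, x l ^ (Fintype.card ι : ℝ)⁻¹ :=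
        Finset.prod_le_prod (fun i _ => Real.rpow_nonneg (hx i) _) fun i _ =>
          Real.rpow_le_rpow (hx i) (hl i) (by positivity)
    _ = x l := by
        rw [Finset.prod_const, Finset.card_univ,
          Real.rpow_inv_natCast_pow (hx l) Fintype.card_ne_zero]

theorem prod_inv_pow_le_prod_rpow (hx : ∀ i, 1 ≤ x i) {n : ι → ℕ} (hn : ∀ i, 1 ≤ n i) {l : ι}
    (hl : 2 ≤ n l) (hmax : ∀ i, x i ≤ x l) :
    ∏ i, (x i ^ n i)⁻¹ ≤ ∏ i, x i ^ (-(1 + (Fintype.card ι : ℝ)⁻¹)) := by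
  have hpos (i) : 0 < x i := one_pos.trans_le (hx i)
  simp_rw [Real.rpow_neg (hpos _).le, Finset.prod_inv_distrib]
  refine inv_anti₀ (Finset.prod_pos fun i _ => Real.rpow_pos_of_pos (hpos i) _) ?_
  calc ∏ i, x i ^ (1 + (Fintype.card ι : ℝ)⁻¹)
      = (∏ i, x i) * ∏ i, x i ^ (Fintype.card ι : ℝ)⁻¹ := by
        simp_rw [Real.rpow_add (hpos _), Real.rpow_one, Finset.prod_mul_distrib]
    _ ≤ (∏ i, x i) * x l :=
        mul_le_mul_of_nonneg_left (prod_rpow_inv_card_le (fun i => (hpos i).le) hmax)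
          (Finset.prod_nonneg fun i _ => (hpos i).le)
    _ ≤ ∏ i, x i ^ n i := prod_mul_le_prod_pow hx hn hl

theorem orderedLIntegral_zetaFactor_ne_top {n : ℕ → ℕ} (hn : ∀ i, 1 ≤ n i) {m : ℕ}
    (hm : 2 ≤ n m) :
    orderedLIntegral Measure.count (fun i k => ENNReal.ofReal (zetaFactor n i k)) (m + 1)
      (Set.Ioi 0) ≠ ∞ := by
  set s : ℝ := -(1 + (Fintype.card (Fin (m + 1)) : ℝ)⁻¹)
  have hsum : Integrable (fun k : ℕ => (k : ℝ) ^ s) Measure.count := by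
    simp_rw [integrable_count_iff, Real.norm_rpow_of_nonneg (Nat.cast_nonneg _),
      Real.norm_natCast, Real.summable_nat_rpow]
    have hinv : 0 < (Fintype.card (Fin (m + 1)) : ℝ)⁻¹ :=
      inv_pos.2 (Nat.cast_pos.2 Fintype.card_pos)
    linarith
  have hprod : Integrable (fun k : Fin (m + 1) → ℕ => ∏ i, (k i : ℝ) ^ s)
      (Measure.pi fun _ => Measure.count) :=
    Integrable.fintype_prod fun _ => hsum
  refine ne_top_of_le_ne_top hprod.lintegral_lt_top.ne ?_
  rw [← setLIntegral_ofReal_prod _ _ _ .of_discrete fun i k _ => zetaFactor_nonneg n i k]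
  refine (setLIntegral_mono' (measurableSet_increasingTuples _ .of_discrete) fun k hk => ?_).trans
    (setLIntegral_le_lintegral _ _)
  exact ENNReal.ofReal_le_ofReal <| prod_inv_pow_le_prod_rpow
    (fun i => Nat.one_le_cast.2 (hk.2 i)) (fun i => hn i) (l := Fin.last m) (by simpa using hm)
    fun i => Nat.cast_le.2 (hk.1.monotone (Fin.le_last i))

end Convergence

theorem mzv_eq_toReal_orderedLIntegral (n : ℕ → ℕ) (m : ℕ) :
    mzv m (fun i => n i) =
      (orderedLIntegral Measure.count (fun i k => ENNReal.ofReal (zetaFactor n i k)) m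
        (Set.Ioi 0)).toReal := by
  rw [← setLIntegral_ofReal_prod _ _ _ .of_discrete fun i k _ => zetaFactor_nonneg n i k,
    lintegral_countable _ (Set.to_countable _),
    ENNReal.tsum_toReal_eq fun k => by simp [Measure.pi_singleton]]
  refine tsum_congr fun k => ?_
  rw [Measure.pi_singleton, Finset.prod_congr rfl fun i _ => Measure.count_singleton (k.1 i),
    Finset.prod_const_one, mul_one]
  exact (ENNReal.toReal_ofReal (Finset.prod_nonneg fun i _ =>
    zetaFactor_nonneg n (i : Fin m) (k.1 i))).symm

theorem eq_wordForm_blockStarts {n : ℕ → ℕ} {m : ℕ}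
    {f : Fin (∑ r ∈ Finset.range m, n r) → ℝ → ℝ}
    (hf1 : ∀ j : Fin _, ∀ i < m, (j : ℕ) = ∑ r ∈ Finset.range i, n r → f j = fun t => (1 - t)⁻¹)
    (hf2 : ∀ j : Fin _, (∀ i < m, (j : ℕ) ≠ ∑ r ∈ Finset.range i, n r) → f j = fun t => t⁻¹) :
    f = fun j : Fin _ => wordForm (blockStarts n) j := by
  ext j t
  by_cases hj : (j : ℕ) ∈ blockStarts n
  · obtain ⟨i, hi : ∑ r ∈ Finset.range i, n r = j⟩ := hj
    have him : i < m := by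
      by_contra! hmi
      have := Finset.sum_le_sum_of_subset (f := n) (Finset.range_mono hmi)
      omega
    rw [hf1 j i him hi.symm, wordForm, if_pos ⟨i, hi⟩]
  · rw [hf2 j fun i _ hi => hj ⟨i, hi.symm⟩, wordForm, if_neg hj]

theorem sum_filter_lt_eq_sum_range {M : Type*} [AddCommMonoid M] (n : ℕ → M) {m : ℕ} (i : Fin m) :
    ∑ r ∈ Finset.univ.filter (fun r : Fin m => r < i), n r = ∑ r ∈ Finset.range i, n r := by
  rw [Finset.filter_gt_eq_Iio, ← Nat.Iio_eq_range, ← Fin.map_valEmbedding_Iio, Finset.sum_map]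
  rfl

/-- Kontsevich's iterated-integral representation of multiple zeta values:
`ζ(n_1,…,n_m) = ∫_{0<t_1<⋯<t_w<1} ∏_j f_j(t_j) dt`, where `f_j(t) = 1/(1−t)` if `j` starts a
block and `f_j(t) = 1/t` otherwise; moreover the integrand is integrable on the open simplex. -/
theorem stmt15 (m : ℕ) (hm : 1 ≤ m) (n : Fin m → ℕ) (hn : ∀ i, 1 ≤ n i)
    (hlast : 2 ≤ n ⟨m - 1, by omega⟩)
    (w : ℕ) (hw : w = ∑ i, n i)
    (f : Fin w → ℝ → ℝ)
    (hf1 : ∀ j : Fin w, ∀ i : Fin m,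
      (j : ℕ) = ∑ r ∈ Finset.univ.filter (fun r : Fin m => r < i), n r →
        f j = fun t => (1 - t)⁻¹)
    (hf2 : ∀ j : Fin w,
      (∀ i : Fin m, (j : ℕ) ≠ ∑ r ∈ Finset.univ.filter (fun r : Fin m => r < i), n r) →
        f j = fun t => t⁻¹)
    (S : Set (Fin w → ℝ))
    (hS : S = {t : Fin w → ℝ | StrictMono t ∧ ∀ j, t j ∈ Set.Ioo 0 1}) :
    IntegrableOn (fun t : Fin w → ℝ => ∏ j, f j (t j)) S volume ∧
    mzv m n = ∫ t in S, ∏ j, f j (t j) := by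
  obtain ⟨N, hN, rfl⟩ : ∃ N : ℕ → ℕ, (∀ i, 1 ≤ N i) ∧ n = fun i : Fin m => N i := by
    refine ⟨fun i => if h : i < m then n ⟨i, h⟩ else 1, fun i => ?_, by simp⟩
    dsimp only
    split_ifs
    exacts [hn _, le_rfl]
  rw [Fin.sum_univ_eq_sum_range N m] at hw
  subst hw hS
  simp only [sum_filter_lt_eq_sum_range] at hf1 hf2
  obtain rfl := eq_wordForm_blockStarts (fun j i hi => hf1 j ⟨i, hi⟩)
    fun j hj => hf2 j fun i => hj i i.2
  obtain ⟨m, rfl⟩ := Nat.exists_eq_add_of_le' hm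
  have hsimplex := orderedLIntegral_wordForm_blockStarts hN (m + 1)
  have hmeas := measurable_wordForm (blockStarts N)
  have hnonneg (j) (t) (ht : t ∈ Set.Ioo 0 1) := wordForm_nonneg (blockStarts N) j ht
  constructor
  · exact integrableOn_increasingTuples_prod volume hmeas measurableSet_Ioo hnonneg
      (hsimplex ▸ orderedLIntegral_zetaFactor_ne_top hN hlast)
  · rw [mzv_eq_toReal_orderedLIntegral, ← hsimplex]
    exact (setIntegral_increasingTuples_prod volume hmeas measurableSet_Ioo hnonneg).symm
end
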